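/- Let G be a finite group admitting an automorphism φ of order 2 with gcd(|G|, 2) = 1, and suppose |x^G| ≤ n for each x ∈ C_G(φ). Then the second derived subgroup G'' of G has order bounded in terms of n. -/

import Mathlib

/-!
Let `K` be a subgroup of `G` all of whose elements have at most `n` conjugates, let `X` be the set
of conjugates of elements of `K` and `H = ⟨X⟩`; we bound `|H'|`.

For `a ∈ K` let `T = ⟨a ^ G⟩`. Since `a ^ G` generates `T` and its centralizer has index at most
`n ^ n`, Schur's theorem bounds `|T'|`. Every `x ∈ X` commutes with all `n!`-th powers, so modulo
`T'` the subgroup `⁅H, T⁆` lies in an abelian group generated by at most `n ^ 2` elements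
`b * c⁻¹`, `b, c ∈ a ^ G`, of order dividing `n!`. Hence `|⁅H, T⁆|` is bounded.

Now take `a ∈ K` for which `{x * a * x⁻¹ | x ∈ X}` is as large as possible and `Y ⊆ X` of size at
most `n` producing all these conjugates. For `u ∈ C_K(Y)` the elements `y * (u * a) * y⁻¹ =
u * (y * a * y⁻¹)`, `y ∈ Y`, are already equally many, so by maximality they are all the
`x * (u * a) * x⁻¹`, `x ∈ X`; comparing the two shows `⁅x, u⁆ ∈ ⁅H, ⟨a ^ G⟩⁆`. As `C_K(Y)` has
index at most `n ^ n` in `K`, the subgroup `H'` lies in a product of at most `n ^ n + 1` subgroups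
`⁅H, ⟨r ^ G⟩⁆` with `r ∈ K`.

Finally let `K = C_G(φ)`. The element `k = g⁻¹ * φ g` is inverted by `φ`, and so is its square root
`l ∈ ⟨k⟩`; therefore `g * l ∈ K`, so that `φ` inverts `G` modulo `H` and `G' ≤ H`.
-/

section

open Subgroup
open scoped commutatorElement

variable {G : Type*} [Group G]

theorem commutator_closure_closure_le {D : Subgroup G} [D.Normal] {s t : Set G}
    (h : ∀ x ∈ s, ∀ y ∈ t, ⁅x, y⁆ ∈ D) : ⁅closure s, closure t⁆ ≤ D := by
  set q := QuotientGroup.mk' D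
  suffices ⁅closure (q '' s), closure (q '' t)⁆ = ⊥ by
    rw [← QuotientGroup.ker_mk' D, ← MonoidHom.comap_bot, ← map_le_iff_le_comap, map_commutator,
      MonoidHom.map_closure, MonoidHom.map_closure, this]
  rw [commutator_eq_bot_iff_le_centralizer, centralizer_closure, closure_le]
  rintro _ ⟨x, hx, rfl⟩ _ ⟨y, hy, rfl⟩
  have hxy : q ⁅x, y⁆ = 1 := (QuotientGroup.eq_one_iff _).2 (h x hx y hy)
  rw [map_commutatorElement, commutatorElement_eq_one_iff_mul_comm] at hxy
  exact hxy.symm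

theorem normalClosure_le_closure_of_conj_mem {s : Set G}
    (hs : ∀ x ∈ s, ∀ g : G, g * x * g⁻¹ ∈ s) : normalClosure s ≤ closure s := by
  refine closure_mono fun y hy ↦ ?_
  obtain ⟨x, hx, hxy⟩ := Group.mem_conjugatesOfSet_iff.1 hy
  obtain ⟨g, rfl⟩ := isConj_iff.1 hxy
  exact hs x hx g

theorem normalClosure_singleton_eq_closure_conjugatesOf (a : G) :
    normalClosure {a} = closure (conjugatesOf a) := by
  simp only [normalClosure, Group.conjugatesOfSet, Set.biUnion_singleton]

section Card

theorem enatCard_le_of_le {H K : Subgroup G} (h : H ≤ K) : ENat.card H ≤ ENat.card K :=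
  Set.encard_le_encard h

theorem enatCard_sup_le_mul (H N : Subgroup G) [N.Normal] :
    ENat.card (H ⊔ N : Subgroup G) ≤ ENat.card H * ENat.card N := by
  change ((H ⊔ N : Subgroup G) : Set G).encard ≤ (H : Set G).encard * (N : Set G).encard
  rw [mul_normal, ← Set.image_mul_prod, ← Set.encard_prod]
  exact Set.encard_image_le _ _

theorem normal_finset_sup {ι : Type*} (s : Finset ι) {E : ι → Subgroup G}
    (hE : ∀ i, (E i).Normal) : (s.sup E).Normal :=
  Finset.sup_induction inferInstance (fun _ _ _ _ ↦ inferInstance) fun i _ ↦ hE i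

theorem enatCard_finset_sup_le_prod {ι : Type*} (s : Finset ι) {E : ι → Subgroup G}
    (hE : ∀ i, (E i).Normal) :
    ENat.card (s.sup E : Subgroup G) ≤ ∏ i ∈ s, ENat.card (E i) := by
  classical
  induction s using Finset.induction_on with
  | empty => simp
  | insert i s hi ih =>
    have := normal_finset_sup s hE
    rw [Finset.sup_insert, Finset.prod_insert hi]
    exact (enatCard_sup_le_mul _ _).trans (by gcongr)

theorem enatCard_le_ker_mul_map {G' : Type*} [Group G'] (H : Subgroup G) (f : G →* G') :
    ENat.card H ≤ ENat.card f.ker * ENat.card (H.map f) := by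
  let f' := f.subgroupMap H
  have hker : ENat.card f'.ker ≤ ENat.card f.ker :=
    ENat.card_le_card_of_injective (f := fun x : f'.ker ↦ (⟨x, congrArg Subtype.val x.2⟩ : f.ker))
      fun x y hxy ↦ Subtype.ext (Subtype.ext (Subtype.mk.inj hxy))
  have hmap : ENat.card (H ⧸ f'.ker) = ENat.card (H.map f) :=
    ENat.card_congr (QuotientGroup.quotientKerEquivOfSurjective f'
      (f.subgroupMap_surjective H)).toEquiv
  rw [ENat.card_congr groupEquivQuotientProdSubgroup, ENat.card_prod, mul_comm, hmap]
  gcongr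

open scoped IsMulCommutative in
theorem enatCard_closure_le_pow_of_commute {s : Set G} {m N : ℕ} (hN : 0 < N)
    (hs : s.encard ≤ m) (hcomm : ∀ x ∈ s, ∀ y ∈ s, Commute x y) (hpow : ∀ x ∈ s, x ^ N = 1) :
    ENat.card (closure s) ≤ (N ^ m : ℕ) := by
  obtain ⟨hfin, hcard⟩ := Set.encard_le_coe_iff_finite_ncard_le.1 hs
  have := hfin.to_subtype
  have := isMulCommutative_closure hcomm
  have hexp : ∀ x : closure s, x ^ N = 1 := by
    have hle : closure s ≤ (powMonoidHom N : closure s →* closure s).ker.map (closure s).subtype :=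
      (closure_le _).2 fun x hx ↦ ⟨⟨x, subset_closure hx⟩, Subtype.ext (hpow x hx), rfl⟩
    rintro ⟨x, hx⟩
    obtain ⟨y, hy, rfl⟩ := hle hx
    exact hy
  have hdvd : Nat.card (closure s) ∣ N ^ m :=
    (card_dvd_exponent_pow_rank' _ hexp).trans <| pow_dvd_pow _ <|
      (rank_closure_finite_le_nat_card s).trans hcard
  have hpos : 0 < N ^ m := Nat.pow_pos hN
  have := Nat.finite_of_card_ne_zero (ne_zero_of_dvd_ne_zero hpos.ne' hdvd)
  rw [ENat.card_eq_coe_natCard]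
  exact_mod_cast Nat.le_of_dvd hpos hdvd

theorem enatCard_closure_le_of_commute_mod {L : Subgroup G} [L.Normal] {s : Set G} {m N : ℕ}
    (hN : 0 < N) (hs : s.encard ≤ m) (hcomm : ∀ x ∈ s, ∀ y ∈ s, ⁅x, y⁆ ∈ L)
    (hpow : ∀ x ∈ s, x ^ N ∈ L) : ENat.card (closure s) ≤ ENat.card L * (N ^ m : ℕ) := by
  have hle := enatCard_le_ker_mul_map (closure s) (QuotientGroup.mk' L)
  rw [QuotientGroup.ker_mk', MonoidHom.map_closure] at hle
  refine hle.trans (mul_le_mul_right ?_ _)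
  refine enatCard_closure_le_pow_of_commute hN ((Set.encard_image_le _ _).trans hs) ?_ ?_
  · rintro _ ⟨x, hx, rfl⟩ _ ⟨y, hy, rfl⟩
    rw [← commutatorElement_eq_one_iff_commute, ← map_commutatorElement]
    exact (QuotientGroup.eq_one_iff _).2 (hcomm x hx y hy)
  · rintro _ ⟨x, hx, rfl⟩
    rw [← map_pow]
    exact (QuotientGroup.eq_one_iff _).2 (hpow x hx)

end Card

section Schur

theorem encard_commutatorSet_le_index_center_sq [(center G).FiniteIndex] :
    (commutatorSet G).encard ≤ ((center G).index ^ 2 : ℕ) := by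
  let Q := G ⧸ center G
  have hsub : commutatorSet G ⊆ Set.range fun p : Q × Q ↦ ⁅p.1.out, p.2.out⁆ := by
    rintro _ ⟨g, h, rfl⟩
    refine ⟨(g, h), ?_⟩
    obtain ⟨⟨z, hz⟩, hgz⟩ := QuotientGroup.mk_out_eq_mul (center G) g
    obtain ⟨⟨w, hw⟩, hhw⟩ := QuotientGroup.mk_out_eq_mul (center G) h
    simp only [hgz, hhw, commutatorElement_def, mul_inv_rev]
    rw [mem_center_iff] at hz hw
    calc g * z * (h * w) * (z⁻¹ * g⁻¹) * (w⁻¹ * h⁻¹)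
      _ = g * (z * (h * w) * z⁻¹) * g⁻¹ * w⁻¹ * h⁻¹ := by group
      _ = g * h * (w * g⁻¹ * w⁻¹) * h⁻¹ := by rw [← hz (h * w)]; group
      _ = g * h * g⁻¹ * h⁻¹ := by rw [← hw g⁻¹]; group
  calc (commutatorSet G).encard
    _ ≤ ENat.card (Q × Q) := (Set.encard_le_encard hsub).trans (by
        rw [← Set.image_univ, ← Set.encard_univ]; exact Set.encard_image_le _ _)
    _ = ((center G).index ^ 2 : ℕ) := by
      rw [ENat.card_prod, ENat.card_eq_coe_natCard, ← Nat.cast_mul, sq]; rfl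

/-- A bound for the order of the derived subgroup of a group whose center has index at most `m`. -/
def schurBound (m : ℕ) : ℕ := m ^ (m * m ^ 2 + 1)

theorem enatCard_commutator_le_schurBound {m : ℕ} [(center G).FiniteIndex]
    (hm : (center G).index ≤ m) : ENat.card (commutator G) ≤ schurBound m := by
  obtain ⟨hfin, hcard⟩ :=
    Set.encard_le_coe_iff_finite_ncard_le.1 (encard_commutatorSet_le_index_center_sq (G := G))
  have := hfin.to_subtype
  have hpos : 0 < (center G).index := Nat.pos_of_ne_zero FiniteIndex.index_ne_zero
  rw [ENat.card_eq_coe_natCard, Nat.cast_le]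
  calc Nat.card (commutator G)
    _ ≤ (center G).index ^ ((center G).index * (commutatorSet G).ncard + 1) :=
      Nat.le_of_dvd (Nat.pow_pos hpos) (card_commutator_dvd_index_center_pow G)
    _ ≤ schurBound m := by
      have := hpos.trans_le hm
      unfold schurBound
      gcongr
      exact hcard.trans (by gcongr)

end Schur

section Conjugates

open scoped Nat

theorem index_centralizer_singleton (x : G) :
    (centralizer {x}).index = (conjugatesOf x).ncard := by
  calc (centralizer {x}).index
    _ = (MulAction.stabilizer (ConjAct G) x).index := by
      rw [centralizer_eq_comap_stabilizer]
      exact index_comap_of_surjective _ ConjAct.toConjAct.surjective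
    _ = (conjugatesOf x).ncard := by
      rw [MulAction.index_stabilizer, ConjAct.orbit_eq_carrier_conjClasses]
      rfl

variable {n : ℕ}

theorem pos_of_encard_conjugatesOf_le {x : G} (hx : (conjugatesOf x).encard ≤ n) : 0 < n := by
  have : 0 < (conjugatesOf x).encard := Set.encard_pos.2 ⟨x, mem_conjugatesOf_self⟩
  exact_mod_cast this.trans_le hx

theorem index_centralizer_singleton_ne_zero_and_le {x : G} (hx : (conjugatesOf x).encard ≤ n) :
    (centralizer {x}).index ≠ 0 ∧ (centralizer {x}).index ≤ n := by
  obtain ⟨hfin, hcard⟩ := Set.encard_le_coe_iff_finite_ncard_le.1 hx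
  rw [index_centralizer_singleton]
  exact ⟨(Set.ncard_pos hfin).2 ⟨x, mem_conjugatesOf_self⟩ |>.ne', hcard⟩

theorem commute_pow_factorial {x : G} (hx : (conjugatesOf x).encard ≤ n) (g : G) :
    Commute x (g ^ n !) := by
  obtain ⟨hne, hle⟩ := index_centralizer_singleton_ne_zero_and_le hx
  have hmem : g ^ n ! ∈ centralizer {x} := pow_mem_of_index_ne_zero_of_dvd hne g
    fun m hm hmi ↦ Nat.dvd_factorial hm (hmi.trans hle)
  exact (mem_centralizer_singleton_iff.1 hmem).symm

theorem index_centralizer_ne_zero_and_le_pow {m : ℕ} {s : Set G} (hn : 0 < n) (hs : s.encard ≤ m)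
    (hconj : ∀ x ∈ s, (conjugatesOf x).encard ≤ n) :
    (centralizer s).index ≠ 0 ∧ (centralizer s).index ≤ n ^ m := by
  obtain ⟨hfin, hcard⟩ := Set.encard_le_coe_iff_finite_ncard_le.1 hs
  have := hfin.fintype
  have hindex (x : s) := index_centralizer_singleton_ne_zero_and_le (hconj x x.2)
  rw [centralizer_eq_iInf, iInf_subtype']
  refine ⟨index_iInf_ne_zero fun x ↦ (hindex x).1, ?_⟩
  calc (⨅ x : s, centralizer {(x : G)}).index
    _ ≤ ∏ x : s, (centralizer {(x : G)}).index := index_iInf_le _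
    _ ≤ n ^ Fintype.card s := Finset.prod_le_pow_card _ _ _ fun x _ ↦ (hindex x).2
    _ ≤ n ^ m := by
      rw [← Nat.card_eq_fintype_card]
      exact Nat.pow_le_pow_right hn hcard

end Conjugates

section Commutator

open scoped Nat

variable {n : ℕ} {a : G}

theorem subgroupOf_centralizer_le_center (s : Set G) :
    (centralizer s).subgroupOf (closure s) ≤ center (closure s) := by
  intro c hc
  rw [mem_subgroupOf, ← centralizer_closure] at hc
  exact mem_center_iff.2 fun t ↦ Subtype.ext (hc t t.2)

theorem enatCard_commutator_normalClosure_singleton_le (ha : (conjugatesOf a).encard ≤ n) :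
    ENat.card (⁅normalClosure {a}, normalClosure {a}⁆ : Subgroup G) ≤ schurBound (n ^ n) := by
  rw [normalClosure_singleton_eq_closure_conjugatesOf]
  set T := closure (conjugatesOf a)
  have hconj : ∀ b ∈ conjugatesOf a, (conjugatesOf b).encard ≤ n := fun b hb ↦ by
    rwa [← IsConj.conjugatesOf_eq hb]
  obtain ⟨hne, hle⟩ :=
    index_centralizer_ne_zero_and_le_pow (pos_of_encard_conjugatesOf_le ha) ha hconj
  set C := centralizer (conjugatesOf a)
  have hcenter : C.subgroupOf T ≤ center T := subgroupOf_centralizer_le_center _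
  have : C.FiniteIndex := ⟨hne⟩
  have : (center T).FiniteIndex := finiteIndex_of_le hcenter
  have hindex : (center T).index ≤ n ^ n :=
    calc (center T).index
      _ ≤ C.relIndex T := index_antitone hcenter
      _ ≤ C.relIndex ⊤ := relIndex_le_of_le_right le_top (by rwa [relIndex_top_right])
      _ ≤ n ^ n := by rwa [relIndex_top_right]
  rw [← map_subtype_commutator,
    ← ENat.card_congr (equivMapOfInjective _ T.subtype T.subtype_injective).toEquiv]
  exact enatCard_commutator_le_schurBound hindex

theorem mul_inv_pow_mem_of_commutatorElement_mem {L : Subgroup G} [L.Normal] {b c : G} {N : ℕ}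
    (hcomm : ⁅b, c⁆ ∈ L) (hpow : b ^ N = c ^ N) : (b * c⁻¹) ^ N ∈ L := by
  rw [← QuotientGroup.eq_one_iff] at hcomm ⊢
  have hbc : Commute (b : G ⧸ L) c := commutatorElement_eq_one_iff_commute.1 hcomm
  have hpow' : (b : G ⧸ L) ^ N = (c : G ⧸ L) ^ N := congrArg (QuotientGroup.mk' L) hpow
  change ((b : G ⧸ L) * (c : G ⧸ L)⁻¹) ^ N = 1
  rw [hbc.inv_right.mul_pow, hpow', inv_pow, mul_inv_cancel]

/-- The set of quotients `b * c⁻¹` of conjugates of `a` with equal `N`-th powers; modulo the derived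
subgroup of `normalClosure {a}` its elements have order dividing `N`. -/
def conjQuotients (a : G) (N : ℕ) : Set G :=
  (fun p : G × G ↦ p.1 * p.2⁻¹) '' {p ∈ conjugatesOf a ×ˢ conjugatesOf a | p.1 ^ N = p.2 ^ N}

theorem encard_conjQuotients_le (ha : (conjugatesOf a).encard ≤ n) (N : ℕ) :
    (conjQuotients a N).encard ≤ (n ^ 2 : ℕ) :=
  calc (conjQuotients a N).encard
    _ ≤ (conjugatesOf a ×ˢ conjugatesOf a).encard :=
      (Set.encard_image_le _ _).trans (Set.encard_le_encard (Set.sep_subset _ _))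
    _ ≤ (n ^ 2 : ℕ) := by
      rw [Set.encard_prod, sq, Nat.cast_mul]
      gcongr

theorem conj_mem_conjugatesOf {b : G} (hb : b ∈ conjugatesOf a) (g : G) :
    g * b * g⁻¹ ∈ conjugatesOf a :=
  IsConj.trans hb (isConj_iff.2 ⟨g, rfl⟩)

theorem conj_mem_conjQuotients {N : ℕ} {x : G} (hx : x ∈ conjQuotients a N) (g : G) :
    g * x * g⁻¹ ∈ conjQuotients a N := by
  obtain ⟨⟨b, c⟩, ⟨⟨hb, hc⟩, hpow⟩, rfl⟩ := hx
  refine ⟨(g * b * g⁻¹, g * c * g⁻¹),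
    ⟨⟨conj_mem_conjugatesOf hb g, conj_mem_conjugatesOf hc g⟩, ?_⟩, ?_⟩
  · simp only [conj_pow] at hpow ⊢
    rw [hpow]
  · simp only [mul_inv_rev, inv_inv, mul_assoc, inv_mul_cancel_left]

theorem enatCard_normalClosure_conjQuotients_le {N : ℕ} (hN : 0 < N)
    (ha : (conjugatesOf a).encard ≤ n) :
    ENat.card (normalClosure (conjQuotients a N)) ≤
      (schurBound (n ^ n) * N ^ n ^ 2 : ℕ) := by
  set T := normalClosure {a}
  have hconj : conjugatesOf a ⊆ T := Group.conjugates_subset_normal (subset_normalClosure rfl)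
  have hT : conjQuotients a N ⊆ T := by
    rintro _ ⟨⟨b, c⟩, ⟨⟨hb, hc⟩, -⟩, rfl⟩
    exact mul_mem (hconj hb) (inv_mem (hconj hc))
  have hcomm : ∀ x ∈ conjQuotients a N, ∀ y ∈ conjQuotients a N, ⁅x, y⁆ ∈ ⁅T, T⁆ :=
    fun x hx y hy ↦ commutator_mem_commutator (hT hx) (hT hy)
  have hpow : ∀ x ∈ conjQuotients a N, x ^ N ∈ ⁅T, T⁆ := by
    rintro _ ⟨⟨b, c⟩, ⟨⟨hb, hc⟩, hbc⟩, rfl⟩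
    exact mul_inv_pow_mem_of_commutatorElement_mem
      (commutator_mem_commutator (hconj hb) (hconj hc)) hbc
  calc ENat.card (normalClosure (conjQuotients a N))
    _ ≤ ENat.card (closure (conjQuotients a N)) := enatCard_le_of_le
      (normalClosure_le_closure_of_conj_mem fun _ ↦ conj_mem_conjQuotients)
    _ ≤ ENat.card (⁅T, T⁆ : Subgroup G) * (N ^ n ^ 2 : ℕ) :=
      enatCard_closure_le_of_commute_mod hN (encard_conjQuotients_le ha N) hcomm hpow
    _ ≤ (schurBound (n ^ n) * N ^ n ^ 2 : ℕ) := by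
      rw [Nat.cast_mul]
      gcongr
      exact enatCard_commutator_normalClosure_singleton_le ha

/-- A bound for the order of `⁅H, normalClosure {a}⁆` when `a` and the members of a generating set
of `H` have at most `n` conjugates. -/
def commutatorBound (n : ℕ) : ℕ := schurBound (n ^ n) * n ! ^ n ^ 2

theorem enatCard_commutator_closure_normalClosure_le {X : Set G}
    (hX : ∀ x ∈ X, (conjugatesOf x).encard ≤ n) (ha : (conjugatesOf a).encard ≤ n) :
    ENat.card (⁅closure X, normalClosure {a}⁆ : Subgroup G) ≤ commutatorBound n := by
  refine (enatCard_le_of_le ?_).trans (enatCard_normalClosure_conjQuotients_le n.factorial_pos ha)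
  rw [normalClosure_singleton_eq_closure_conjugatesOf]
  refine commutator_closure_closure_le fun x hx b hb ↦ subset_normalClosure ?_
  refine ⟨(x * b * x⁻¹, b), ⟨⟨conj_mem_conjugatesOf hb x, hb⟩, ?_⟩, rfl⟩
  rw [conj_pow, (commute_pow_factorial (hX x hx) b).eq, mul_inv_cancel_right]

end Commutator

section Maximal

variable {n : ℕ} {K : Subgroup G}

theorem commutatorElement_eq_of_conj_mul_eq {x y u a : G} (hyu : Commute y u)
    (h : y * (u * a) * y⁻¹ = x * (u * a) * x⁻¹) : ⁅x, u⁆ = u * (⁅y, a⁆ * ⁅x, a⁆⁻¹) * u⁻¹ := by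
  have hconj : x * u * x⁻¹ * (x * a * x⁻¹) = u * (y * a * y⁻¹) := by
    calc x * u * x⁻¹ * (x * a * x⁻¹)
      _ = x * (u * a) * x⁻¹ := by group
      _ = y * u * a * y⁻¹ := by rw [← h, ← mul_assoc y]
      _ = u * (y * a * y⁻¹) := by rw [hyu.eq]; group
  rw [commutatorElement_def, eq_mul_inv_of_mul_eq hconj]
  simp only [commutatorElement_def]
  group

theorem exists_subset_conj_image_eq (hK : ∀ k ∈ K, (conjugatesOf k).encard ≤ n) (X : Set G) :
    ∃ a ∈ K, ∃ Y ⊆ X, Y.encard ≤ n ∧ ∀ u ∈ K, u ∈ centralizer Y →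
      (fun y ↦ y * (u * a) * y⁻¹) '' Y = (fun x ↦ x * (u * a) * x⁻¹) '' X := by
  let conjX (k : G) : Set G := (fun x ↦ x * k * x⁻¹) '' X
  have hle (k : G) (hk : k ∈ K) : (conjX k).encard ≤ n := by
    refine (Set.encard_le_encard ?_).trans (hK k hk)
    rintro _ ⟨x, -, rfl⟩
    exact isConj_iff.2 ⟨x, rfl⟩
  have hfin (k : G) (hk : k ∈ K) := Set.encard_le_coe_iff_finite_ncard_le.1 (hle k hk)
  obtain ⟨a, haK, hmax⟩ : ∃ a, MaximalFor (· ∈ K) (fun k ↦ (conjX k).ncard) a := by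
    refine Set.Finite.exists_maximalFor' _ (K : Set G) ((Set.finite_Iic n).subset ?_) ⟨1, K.one_mem⟩
    rintro _ ⟨k, hk, rfl⟩
    exact (hfin k hk).2
  obtain ⟨Y, hYX, hbij⟩ := Set.exists_subset_bijOn X fun x ↦ x * a * x⁻¹
  refine ⟨a, haK, Y, hYX, ?_, fun u hu huY ↦ ?_⟩
  · rw [← hbij.injOn.encard_image, hbij.image_eq]
    exact hle a haK
  have hua : u * a ∈ K := mul_mem hu haK
  refine Set.eq_of_subset_of_ncard_le (Set.image_mono hYX) ?_ (hfin _ hua).1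
  have himage : (fun y ↦ y * (u * a) * y⁻¹) '' Y = (u * ·) '' conjX a := by
    rw [← show _ = conjX a from hbij.image_eq, Set.image_image]
    refine Set.image_congr fun y hy ↦ ?_
    rw [← mul_assoc y, huY y hy]
    group
  rw [himage, Set.ncard_image_of_injective _ (mul_right_injective u)]
  exact (le_total _ _).elim id (hmax hua)

theorem exists_commutatorElement_mem (hK : ∀ k ∈ K, (conjugatesOf k).encard ≤ n) (X : Set G)
    [(closure X).Normal] :
    ∃ a ∈ K, ∃ Y ⊆ X, Y.encard ≤ n ∧ ∀ u ∈ K, u ∈ centralizer Y → ∀ x ∈ X,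
      ⁅x, u⁆ ∈ ⁅closure X, normalClosure {a}⁆ := by
  obtain ⟨a, haK, Y, hYX, hY, himage⟩ := exists_subset_conj_image_eq hK X
  refine ⟨a, haK, Y, hYX, hY, fun u hu huY x hx ↦ ?_⟩
  have hmem {z : G} (hz : z ∈ X) : ⁅z, a⁆ ∈ ⁅closure X, normalClosure {a}⁆ :=
    commutator_mem_commutator (subset_closure hz) (subset_normalClosure rfl)
  obtain ⟨y, hy, hyx⟩ : x * (u * a) * x⁻¹ ∈ (fun y ↦ y * (u * a) * y⁻¹) '' Y :=
    himage u hu huY ▸ ⟨x, hx, rfl⟩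
  rw [commutatorElement_eq_of_conj_mul_eq (huY y hy) hyx]
  exact Normal.conj_mem inferInstance _ (mul_mem (hmem (hYX hy)) (inv_mem (hmem hx))) u

theorem exists_finset_transversal (K C : Subgroup G) [C.FiniteIndex] :
    ∃ R : Finset G, ↑R ⊆ (K : Set G) ∧ R.card ≤ C.index ∧ ∀ k ∈ K, ∃ r ∈ R, r⁻¹ * k ∈ C := by
  obtain ⟨R, hRK, hbij⟩ := Set.exists_subset_bijOn (K : Set G) ((↑) : G → G ⧸ C)
  have hfin : R.Finite := Set.Finite.of_finite_image (Set.toFinite _) hbij.injOn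
  refine ⟨hfin.toFinset, by simpa using hRK, ?_, fun k hk ↦ ?_⟩
  · rw [← Set.ncard_eq_toFinset_card R hfin, ← hbij.injOn.ncard_image]
    exact Set.ncard_le_card _
  · obtain ⟨r, hr, hrk⟩ := hbij.surjOn ⟨k, hk, rfl⟩
    exact ⟨r, hfin.mem_toFinset.2 hr, QuotientGroup.eq.1 hrk⟩

theorem exists_finset_commutatorElement_mem_sup (hK : ∀ k ∈ K, (conjugatesOf k).encard ≤ n)
    {X : Set G} [(closure X).Normal] (hX : ∀ x ∈ X, (conjugatesOf x).encard ≤ n) :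
    ∃ R : Finset G, ↑R ⊆ (K : Set G) ∧ R.card ≤ n ^ n + 1 ∧ ∀ x ∈ X, ∀ k ∈ K,
      ⁅x, k⁆ ∈ R.sup fun r ↦ ⁅closure X, normalClosure {r}⁆ := by
  classical
  obtain ⟨a, haK, Y, hYX, hY, hmem⟩ := exists_commutatorElement_mem hK X
  obtain ⟨hne, hle⟩ := index_centralizer_ne_zero_and_le_pow
    (pos_of_encard_conjugatesOf_le (hK 1 K.one_mem)) hY fun y hy ↦ hX y (hYX hy)
  have : (centralizer Y).FiniteIndex := ⟨hne⟩
  obtain ⟨R, hRK, hRcard, hR⟩ := exists_finset_transversal K (centralizer Y)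
  refine ⟨insert a R, ?_, ?_, fun x hx k hk ↦ ?_⟩
  · rw [Finset.coe_insert]
    exact Set.insert_subset haK hRK
  · exact (Finset.card_insert_le a R).trans (Nat.succ_le_succ (hRcard.trans hle))
  set E : G → Subgroup G := fun r ↦ ⁅closure X, normalClosure {r}⁆
  have hE {r : G} (hr : r ∈ insert a R) : E r ≤ (insert a R).sup E := Finset.le_sup hr
  have hnormal : ((insert a R).sup E).Normal := normal_finset_sup _ fun r ↦ inferInstance
  obtain ⟨r, hr, hu⟩ := hR k hk
  have hxr : ⁅x, r⁆ ∈ E r :=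
    commutator_mem_commutator (subset_closure hx) (subset_normalClosure rfl)
  have hxu : ⁅x, r⁻¹ * k⁆ ∈ E a := hmem _ (mul_mem (inv_mem (hRK hr)) hk) hu x hx
  have hxk : ⁅x, k⁆ = ⁅x, r⁆ * (r * ⁅x, r⁻¹ * k⁆ * r⁻¹) := by
    simp only [commutatorElement_def]
    group
  rw [hxk]
  exact mul_mem (hE (Finset.mem_insert_of_mem hr) hxr)
    (hnormal.conj_mem _ (hE (Finset.mem_insert_self a R) hxu) r)

/-- A bound for the order of the derived subgroup of `normalClosure K` when all elements of the
subgroup `K` have at most `n` conjugates. -/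
def secondDerivedBound (n : ℕ) : ℕ := commutatorBound n ^ (n ^ n + 1)

theorem commutator_normalClosure_le {s : Set G} {L : Subgroup G} [L.Normal]
    (h : ∀ x ∈ Group.conjugatesOfSet s, ∀ k ∈ s, ⁅x, k⁆ ∈ L) :
    ⁅normalClosure s, normalClosure s⁆ ≤ L := by
  refine commutator_closure_closure_le fun x hx y hy ↦ ?_
  obtain ⟨k, hk, hky⟩ := Group.mem_conjugatesOfSet_iff.1 hy
  obtain ⟨g, rfl⟩ := isConj_iff.1 hky
  have hx' : g⁻¹ * x * g ∈ Group.conjugatesOfSet s := by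
    simpa only [inv_inv] using Group.conj_mem_conjugatesOfSet (c := g⁻¹) hx
  have hconj : ⁅x, g * k * g⁻¹⁆ = g * ⁅g⁻¹ * x * g, k⁆ * g⁻¹ := by
    simp only [commutatorElement_def]
    group
  exact hconj ▸ Normal.conj_mem inferInstance _ (h _ hx' k hk) g

theorem enatCard_commutator_normalClosure_le (hK : ∀ k ∈ K, (conjugatesOf k).encard ≤ n) :
    ENat.card (⁅normalClosure (K : Set G), normalClosure (K : Set G)⁆ : Subgroup G) ≤
      secondDerivedBound n := by
  set X := Group.conjugatesOfSet (K : Set G)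
  have hX : ∀ x ∈ X, (conjugatesOf x).encard ≤ n := fun x hx ↦ by
    obtain ⟨k, hk, hkx⟩ := Group.mem_conjugatesOfSet_iff.1 hx
    exact hkx.conjugatesOf_eq ▸ hK k hk
  have : (closure X).Normal := normalClosure_normal
  obtain ⟨R, hRK, hRcard, hmem⟩ := exists_finset_commutatorElement_mem_sup hK hX
  set E : G → Subgroup G := fun r ↦ ⁅closure X, normalClosure {r}⁆
  have hE : ∀ r, (E r).Normal := fun r ↦ inferInstance
  have := normal_finset_sup R hE
  have hbound : ∀ r ∈ R, ENat.card (E r) ≤ commutatorBound n := fun r hr ↦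
    enatCard_commutator_closure_normalClosure_le hX (hK r (hRK hr))
  have hpos : 1 ≤ commutatorBound n := by
    have hn : 0 < n := pos_of_encard_conjugatesOf_le (hK 1 K.one_mem)
    have : 0 < schurBound (n ^ n) := Nat.pow_pos (Nat.pow_pos hn)
    exact Nat.mul_pos this (Nat.pow_pos n.factorial_pos)
  calc ENat.card (⁅normalClosure (K : Set G), normalClosure (K : Set G)⁆ : Subgroup G)
    _ ≤ ENat.card (R.sup E : Subgroup G) := enatCard_le_of_le (commutator_normalClosure_le hmem)
    _ ≤ ∏ r ∈ R, ENat.card (E r) := enatCard_finset_sup_le_prod R hE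
    _ ≤ (commutatorBound n : ℕ∞) ^ R.card := Finset.prod_le_pow_card _ _ _ hbound
    _ ≤ secondDerivedBound n := by
      exact_mod_cast Nat.pow_le_pow_right hpos hRcard

end Maximal

section FixedPoints

variable {φ : G →* G}

theorem exists_pow_sq_eq_self_of_odd_orderOf {k : G} (hk : Odd (orderOf k)) :
    ∃ m : ℕ, (k ^ m) ^ 2 = k := by
  obtain ⟨m, hm⟩ := exists_pow_eq_self_of_coprime (Nat.coprime_two_left.2 hk)
  exact ⟨m, by rwa [pow_right_comm]⟩

theorem mul_map_mem_of_fixedPoints_le (hφ : Function.Involutive φ)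
    (hodd : ∀ g : G, Odd (orderOf g)) {H : Subgroup G} [H.Normal]
    (hH : ∀ x, φ x = x → x ∈ H) (g : G) : g * φ g ∈ H := by
  set k := g⁻¹ * φ g with hk
  have hφk : φ k = k⁻¹ := by simp only [hk, map_mul, map_inv, hφ g, mul_inv_rev, inv_inv]
  obtain ⟨m, hm⟩ := exists_pow_sq_eq_self_of_odd_orderOf (hodd k)
  set l := k ^ m with hl
  have hφl : φ l = l⁻¹ := by rw [hl, map_pow, hφk, inv_pow]
  have hφg : φ g = g * l ^ 2 := by rw [hm, hk, mul_inv_cancel_left]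
  have hfix : φ (g * l) = g * l := by
    rw [map_mul, hφg, hφl]
    group
  have hgl : g * φ g = g * l * (l⁻¹ * (g * l) * l⁻¹⁻¹) := by
    rw [hφg, sq]
    group
  rw [hgl]
  exact mul_mem (hH _ hfix) (Normal.conj_mem inferInstance _ (hH _ hfix) _)

theorem commutator_le_of_mul_map_mem {H : Subgroup G} [H.Normal] (h : ∀ g, g * φ g ∈ H) :
    commutator G ≤ H := by
  have hinv (g : G) : ((φ g : G) : G ⧸ H) = (g : G ⧸ H)⁻¹ :=
    eq_inv_of_mul_eq_one_right ((QuotientGroup.eq_one_iff _).2 (h g))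
  refine commutator_le.2 fun g _ k _ ↦ (QuotientGroup.eq_one_iff _).1 ?_
  have hinv_mul : (g : G ⧸ H)⁻¹ * (k : G ⧸ H)⁻¹ = ((g : G ⧸ H) * k)⁻¹ := by
    rw [← hinv, ← hinv, ← QuotientGroup.mk_mul, ← map_mul, hinv, QuotientGroup.mk_mul]
  calc ((⁅g, k⁆ : G) : G ⧸ H)
    _ = g * k * ((g : G ⧸ H)⁻¹ * (k : G ⧸ H)⁻¹) :=
      (map_commutatorElement (QuotientGroup.mk' H) g k).trans (mul_assoc _ _ _)
    _ = 1 := by rw [hinv_mul, mul_inv_cancel]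

end FixedPoints

end

theorem stmt_7_general {G : Type*} [Group G] {n : ℕ} {φ : G →* G} (hφ : Function.Involutive φ)
    (hodd : ∀ g : G, Odd (orderOf g)) (hfix : ∀ x, φ x = x → (conjugatesOf x).encard ≤ n) :
    ENat.card (⁅commutator G, commutator G⁆ : Subgroup G) ≤ secondDerivedBound n := by
  let K : Subgroup G := φ.eqLocus (MonoidHom.id G)
  have hle : commutator G ≤ Subgroup.normalClosure (K : Set G) :=
    commutator_le_of_mul_map_mem <|
      mul_map_mem_of_fixedPoints_le hφ hodd fun x hx ↦ Subgroup.subset_normalClosure hx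
  exact (enatCard_le_of_le (Subgroup.commutator_mono hle hle)).trans
    (enatCard_commutator_normalClosure_le hfix)

/-- If a finite group `G` of odd order admits an automorphism `φ` of order 2 with
`|x^G| ≤ n` for each fixed point `x` of `φ`, then the second derived subgroup `G''`
has `n`-bounded order. -/
theorem stmt_7 :
    ∃ f : ℕ → ℕ, ∀ n : ℕ, ∀ (G : Type) [Group G] [Finite G] (φ : MulAut G),
      orderOf φ = 2 → (Nat.card G).Coprime 2 →
      (∀ x : G, φ x = x → (conjugatesOf x).Finite ∧ Nat.card (conjugatesOf x) ≤ n) →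
      Nat.card (⁅commutator G, commutator G⁆ : Subgroup G) ≤ f n := by
  refine ⟨secondDerivedBound, fun n G _ _ φ hord hcop hfix ↦ ?_⟩
  have hφ : Function.Involutive φ := fun g ↦ by
    rw [← MulAut.mul_apply, ← sq, ← hord, pow_orderOf_eq_one, MulAut.one_apply]
  have hodd (g : G) : Odd (orderOf g) :=
    (Nat.coprime_two_right.1 hcop).of_dvd_nat (orderOf_dvd_natCard g)
  have hcard := stmt_7_general (φ := φ.toMonoidHom) hφ hodd fun x hx ↦
    Set.encard_le_coe_iff_finite_ncard_le.2 (hfix x hx)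
  rwa [ENat.card_eq_coe_natCard, Nat.cast_le] at hcard
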